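/- arXiv:1902.07391 — 3 statements merged into one kernel-verified Lean document; each statement's English description precedes it below -/
import Mathlib

section
/- Let G be a group, K ≤ G a subgroup, and Y a set with a left K-action. Let φ: K\G → G be a section of the right-coset quotient. Then the map ψ: (G ×_K Y) × G → G × (K\G) × Y given by ψ([g,y], h) = (h·φ(Kg⁻¹h)⁻¹, Kg⁻¹h, (φ(Kg⁻¹h)h⁻¹g)·y) is well defined and is a G-equivariant bijection, where G acts on (G ×_K Y) × G diagonally by g₀·([g,y], h) = ([g₀g, y], g₀h), and on G × (K\G) × Y by left multiplication on the first factor only. -/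
/-- The balanced product `G ×_K Y`: the quotient of `G × Y` by the relation
`(g, y) ~ (g * k⁻¹, k • y)` for `k ∈ K`. -/
def balancedRel {G : Type*} [Group G] (K : Subgroup G) (Y : Type*) [MulAction K Y] :
    Setoid (G × Y) where
  r p q := ∃ k : K, q.1 = p.1 * (k : G)⁻¹ ∧ q.2 = k • p.2
  iseqv := by
    constructor
    · intro p
      exact ⟨1, by simp, by simp⟩
    · rintro p q ⟨k, h1, h2⟩
      exact ⟨k⁻¹, by simp [h1, mul_assoc], by simp [h2]⟩
    · rintro p q r ⟨k, h1, h2⟩ ⟨k', h1', h2'⟩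
      exact ⟨k' * k, by simp [h1', h1, mul_assoc], by simp [h2', h2, mul_smul]⟩

/-- The action of `g₀ ∈ G` on the balanced product `G ×_K Y`, `g₀ • [g, y] = [g₀ g, y]`. -/
def gAction {G : Type*} [Group G] (K : Subgroup G) (Y : Type*) [MulAction K Y] (g₀ : G) :
    Quotient (balancedRel K Y) → Quotient (balancedRel K Y) :=
  Quotient.lift (fun p => Quotient.mk (balancedRel K Y) (g₀ * p.1, p.2))
    (by
      rintro ⟨g, y⟩ ⟨g', y'⟩ ⟨k, h1, h2⟩
      dsimp only at h1 h2
      exact Quotient.sound ⟨k, by simp [h1, mul_assoc], h2⟩)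

/-- The map `ψ : (G ×_K Y) × G → G × (K\G) × Y` given by
`ψ([g,y], h) = (h·φ(Kg⁻¹h)⁻¹, Kg⁻¹h, (φ(Kg⁻¹h)h⁻¹g)·y)` is well defined and is a
`G`-equivariant bijection, where `φ : K\G → G` is a section of the right-coset quotient. -/
theorem balanced_product_trivialization
    {G : Type*} [Group G] (K : Subgroup G) (Y : Type*) [MulAction K Y]
    (φ : Quotient (QuotientGroup.rightRel K) → G)
    (hφ : ∀ g : G,
      Quotient.mk (QuotientGroup.rightRel K) (φ (Quotient.mk (QuotientGroup.rightRel K) g)) =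
        Quotient.mk (QuotientGroup.rightRel K) g) :
    ∃ ψ : Quotient (balancedRel K Y) × G → G × Quotient (QuotientGroup.rightRel K) × Y,
      (∀ (g : G) (y : Y) (h : G),
        ∃ hk : φ (Quotient.mk (QuotientGroup.rightRel K) (g⁻¹ * h)) * h⁻¹ * g ∈ K,
          ψ (Quotient.mk (balancedRel K Y) (g, y), h) =
            (h * (φ (Quotient.mk (QuotientGroup.rightRel K) (g⁻¹ * h)))⁻¹,
             Quotient.mk (QuotientGroup.rightRel K) (g⁻¹ * h),
             (⟨φ (Quotient.mk (QuotientGroup.rightRel K) (g⁻¹ * h)) * h⁻¹ * g, hk⟩ : K) • y)) ∧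
      Function.Bijective ψ ∧
      (∀ (g₀ : G) (q : Quotient (balancedRel K Y)) (h : G),
        ψ (gAction K Y g₀ q, g₀ * h) =
          (g₀ * (ψ (q, h)).1, (ψ (q, h)).2.1, (ψ (q, h)).2.2)) := by
  have mem : ∀ g h : G, φ (Quotient.mk (QuotientGroup.rightRel K) (g⁻¹ * h)) * h⁻¹ * g ∈ K := by
    intro g h
    have h1 := QuotientGroup.rightRel_apply.mp (Quotient.exact (hφ (g⁻¹ * h)))
    have h2 := K.inv_mem h1
    simpa [mul_assoc] using h2
  have coset : ∀ (g h : G) (k : K), Quotient.mk (QuotientGroup.rightRel K) ((g * (k : G)⁻¹)⁻¹ * h) =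
      Quotient.mk (QuotientGroup.rightRel K) (g⁻¹ * h) := by
    intro g h k
    apply Quotient.sound
    apply QuotientGroup.rightRel_apply.mpr
    have : g⁻¹ * h * ((g * (k : G)⁻¹)⁻¹ * h)⁻¹ = (k : G)⁻¹ := by group
    rw [this]
    exact K.inv_mem k.2
  let F : G → G × Y → G × Quotient (QuotientGroup.rightRel K) × Y := fun h p =>
    (h * (φ (Quotient.mk (QuotientGroup.rightRel K) (p.1⁻¹ * h)))⁻¹,
     Quotient.mk (QuotientGroup.rightRel K) (p.1⁻¹ * h),
     (⟨φ (Quotient.mk (QuotientGroup.rightRel K) (p.1⁻¹ * h)) * h⁻¹ * p.1, mem p.1 h⟩ : K) • p.2)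
  have hF : ∀ (h : G) (p q : G × Y), (balancedRel K Y).r p q → F h p = F h q := by
    rintro h ⟨g, y⟩ ⟨g', y'⟩ ⟨k, h1, h2⟩
    dsimp only at h1 h2
    subst h1 h2
    refine Prod.ext ?_ (Prod.ext ?_ ?_)
    · simp only [F, coset]
    · simp only [F, coset]
    · simp only [F, smul_smul]
      refine congrArg (fun k : K => k • y) (Subtype.ext ?_)
      simp only [Subgroup.coe_mul, coset]
      group
  let ψ : Quotient (balancedRel K Y) × G → G × Quotient (QuotientGroup.rightRel K) × Y :=
    fun x => Quotient.lift (F x.2) (hF x.2) x.1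
  have hψ : ∀ (g : G) (y : Y) (h : G), ψ (Quotient.mk (balancedRel K Y) (g, y), h) = F h (g, y) :=
    fun _ _ _ => rfl
  have hφ' : ∀ c, Quotient.mk (QuotientGroup.rightRel K) (φ c) = c := by
    intro c
    induction c using Quotient.inductionOn with
    | h g => exact hφ g
  refine ⟨ψ, fun g y h => ⟨mem g h, rfl⟩, ?_, ?_⟩
  · rw [Function.bijective_iff_has_inverse]
    refine ⟨fun t => (Quotient.mk (balancedRel K Y) (t.1, t.2.2), t.1 * φ t.2.1), ?_, ?_⟩
    · rintro ⟨q, h⟩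
      induction q using Quotient.inductionOn with
      | h p =>
        obtain ⟨g, y⟩ := p
        rw [hψ]
        refine Prod.ext ?_ ?_
        · refine (Quotient.sound ⟨⟨_, mem g h⟩, ?_, rfl⟩ : Quotient.mk (balancedRel K Y) (g, y) = _).symm
          simp only [F]
          group
        · simp only [F]
          group
    · rintro ⟨a, c, y⟩
      have e : Quotient.mk (QuotientGroup.rightRel K) (a⁻¹ * (a * φ c)) = c := by
        rw [inv_mul_cancel_left, hφ']
      rw [hψ]
      refine Prod.ext ?_ (Prod.ext ?_ ?_)
      · simp only [F, e]
        group
      · simp only [F, e]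
      · simp only [F]
        refine Eq.trans (congrArg (fun k : K => k • y) (Subtype.ext ?_)) (one_smul K y)
        simp only [e, Subgroup.coe_one]
        group
  · intro g₀ q h
    induction q using Quotient.inductionOn with
    | h p =>
      obtain ⟨g, y⟩ := p
      have e : (g₀ * g)⁻¹ * (g₀ * h) = g⁻¹ * h := by group
      change F (g₀ * h) (g₀ * g, y) = (g₀ * (F h (g, y)).1, (F h (g, y)).2.1, (F h (g, y)).2.2)
      refine Prod.ext ?_ (Prod.ext ?_ ?_)
      · simp only [F, e, mul_assoc]
      · simp only [F, e]
      · simp only [F]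
        refine congrArg (fun k : K => k • y) (Subtype.ext ?_)
        simp only [e]
        group
end

section
/- Let G be a group equipped with a left-invariant metric d (i.e. d(ag, ag') = d(g, g') for all a, g, g' ∈ G), let K ≤ G be a subgroup of finite diameter diam(K) = sup{d(k, k') : k, k' ∈ K} (for instance a compact subgroup when d is continuous and proper), and let φ: K\G → G be a section of the right-coset quotient. Define ψ₁: G × G → G by ψ₁(g, h) = h·φ(Kg⁻¹h)⁻¹. Then for all g, g', h, h' ∈ G: d(g, g') − 2·diam(K) ≤ d(ψ₁(g, h), ψ₁(g', h')) ≤ d(g, g') + 2·diam(K). -/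
/-- Let `G` be a group with a left-invariant metric and `K ≤ G` a subgroup of finite
diameter, `φ : K\G → G` a section of the right-coset quotient, and
`ψ₁(g, h) = h·φ(Kg⁻¹h)⁻¹`.  Then for all `g, g', h, h'`:
`d(g, g') − 2·diam K ≤ d(ψ₁(g,h), ψ₁(g',h')) ≤ d(g, g') + 2·diam K`. -/
theorem psi1_distance_estimate
    {G : Type*} [Group G] [MetricSpace G]
    (hinv : ∀ a g g' : G, dist (a * g) (a * g') = dist g g')
    (K : Subgroup G) (hK : Bornology.IsBounded (K : Set G))
    (φ : Quotient (QuotientGroup.rightRel K) → G)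
    (hφ : ∀ g : G,
      Quotient.mk (QuotientGroup.rightRel K) (φ (Quotient.mk (QuotientGroup.rightRel K) g)) =
        Quotient.mk (QuotientGroup.rightRel K) g)
    (ψ₁ : G → G → G)
    (hψ₁ : ∀ g h : G, ψ₁ g h = h * (φ (Quotient.mk (QuotientGroup.rightRel K) (g⁻¹ * h)))⁻¹) :
    ∀ g g' h h' : G,
      dist g g' - 2 * Metric.diam (K : Set G) ≤ dist (ψ₁ g h) (ψ₁ g' h') ∧
      dist (ψ₁ g h) (ψ₁ g' h') ≤ dist g g' + 2 * Metric.diam (K : Set G) := by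
  have key : ∀ g h : G, dist (ψ₁ g h) g ≤ Metric.diam (K : Set G) := by
    intro g h
    have h1 := QuotientGroup.rightRel_apply.mp (Quotient.exact (hφ (g⁻¹ * h)))
    rw [← hinv g⁻¹, inv_mul_cancel, hψ₁, ← mul_assoc]
    exact Metric.dist_le_diam_of_mem hK h1 K.one_mem
  intro g g' h h'
  have a := key g h
  have b := key g' h'
  have t1 := dist_triangle4 g (ψ₁ g h) (ψ₁ g' h') g'
  have t2 := dist_triangle4 (ψ₁ g h) g g' (ψ₁ g' h')
  rw [dist_comm g (ψ₁ g h)] at t1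
  rw [dist_comm g' (ψ₁ g' h')] at t2
  constructor <;> linarith
end

section
/- For s ∈ (0, 1] define b_s: ℝ → ℝ by b_s(x) = x / (|x|^{1/s} + 1)^s, and define b: ℝ → ℝ by b(x) = x for |x| < 1 and b(x) = x/|x| for |x| ≥ 1 (the clamp of x to [−1, 1]). Then sup_{x ∈ ℝ} |b_s(x) − b(x)| tends to 0 as s tends to 0 from the right. -/
theorem bs_pointwise_bound (s : ℝ) (hs : 0 < s) (x : ℝ) :
    |x / (|x| ^ (1 / s) + 1) ^ s - max (-1) (min 1 x)| ≤ 2 ^ s - 1 := by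
  have hx := abs_nonneg x
  have hp : 0 ≤ |x| ^ (1 / s) := Real.rpow_nonneg hx _
  have hs' : 0 ≤ 1 / s := by positivity
  have key : ∀ y : ℝ, 0 ≤ y → (y ^ (1 / s)) ^ s = y := by
    intro y hy
    rw [← Real.rpow_mul hy, one_div_mul_cancel hs.ne', Real.rpow_one]
  obtain ⟨m, hm⟩ : ∃ m, m = max 1 |x| := ⟨_, rfl⟩
  have hm1 : 1 ≤ m := hm ▸ le_max_left _ _
  have hmx : |x| ≤ m := hm ▸ le_max_right _ _
  have hlow : m ≤ (|x| ^ (1 / s) + 1) ^ s := by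
    rw [hm]
    apply max_le
    · exact Real.one_le_rpow (by linarith) hs.le
    · calc |x| = (|x| ^ (1 / s)) ^ s := (key _ hx).symm
        _ ≤ _ := Real.rpow_le_rpow hp (by linarith) hs.le
  have hup : (|x| ^ (1 / s) + 1) ^ s ≤ 2 ^ s * m := by
    have h1 : |x| ^ (1 / s) ≤ m ^ (1 / s) := Real.rpow_le_rpow hx hmx hs'
    have h2 : 1 ≤ m ^ (1 / s) := Real.one_le_rpow hm1 hs'
    calc (|x| ^ (1 / s) + 1) ^ s ≤ (2 * m ^ (1 / s)) ^ s :=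
          Real.rpow_le_rpow (by linarith) (by linarith) hs.le
      _ = 2 ^ s * m := by
          rw [Real.mul_rpow (by norm_num) (by linarith), key m (by linarith)]
  have h2s : (1 : ℝ) ≤ 2 ^ s := Real.one_le_rpow (by norm_num) hs.le
  generalize (|x| ^ (1 / s) + 1) ^ s = D at *
  generalize (2 : ℝ) ^ s = t at *
  obtain ⟨c, hc⟩ : ∃ c, c = max (-1) (min 1 x) := ⟨_, rfl⟩
  have hc1 : |c| ≤ 1 := by
    rw [hc, abs_le]
    exact ⟨le_max_left _ _, max_le (by norm_num) (min_le_left _ _)⟩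
  have hcm : c * m = x := by
    rw [hc, hm]
    rcases le_total x (-1) with h | h
    · rw [min_eq_right (by linarith), max_eq_left h, abs_of_nonpos (by linarith),
        max_eq_right (by linarith)]
      ring
    · rcases le_total x 1 with h' | h'
      · rw [min_eq_right h', max_eq_right h, max_eq_left (abs_le.2 ⟨h, h'⟩), mul_one]
      · rw [min_eq_left h', max_eq_right (by norm_num), abs_of_nonneg (by linarith),
          max_eq_right h', one_mul]
  rw [← hc]
  have hD : 0 < D := by linarith
  have e : x / D - c = c * (m - D) / D := by
    rw [← hcm]; field_simp
  rw [e, abs_div, abs_mul, abs_of_pos hD, div_le_iff₀ hD, abs_of_nonpos (by linarith : m - D ≤ 0)]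
  calc |c| * -(m - D) ≤ 1 * -(m - D) := mul_le_mul_of_nonneg_right hc1 (by linarith)
    _ ≤ (t - 1) * m := by linarith
    _ ≤ (t - 1) * D := mul_le_mul_of_nonneg_left hlow (by linarith)


/-- For `s ∈ (0, 1]`, let `b_s(x) = x / (|x|^{1/s} + 1)^s`, and let `b` be the clamp of
`x` to `[−1, 1]` (i.e. `b(x) = x` for `|x| < 1` and `b(x) = x/|x|` for `|x| ≥ 1`).
Then `sup_{x ∈ ℝ} |b_s(x) − b(x)| → 0` as `s → 0⁺`. -/
theorem sup_dist_bs_to_clamp_tendsto_zero :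
    Filter.Tendsto
      (fun s : ℝ => ⨆ x : ℝ, |x / (|x| ^ (1 / s) + 1) ^ s - max (-1) (min 1 x)|)
      (nhdsWithin 0 (Set.Ioi 0)) (nhds 0) := by
  have hlim : Filter.Tendsto (fun s : ℝ => (2 : ℝ) ^ s - 1) (nhdsWithin 0 (Set.Ioi 0))
      (nhds 0) := by
    have h : Continuous (fun s : ℝ => (2 : ℝ) ^ s - 1) :=
      (Real.continuous_const_rpow (by norm_num)).sub continuous_const
    have h0 := h.tendsto 0
    simp only [Real.rpow_zero, sub_self] at h0
    exact h0.mono_left nhdsWithin_le_nhds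
  refine tendsto_of_tendsto_of_tendsto_of_le_of_le' tendsto_const_nhds hlim ?_ ?_
  · exact Filter.Eventually.of_forall fun s => Real.iSup_nonneg fun x => abs_nonneg _
  · filter_upwards [self_mem_nhdsWithin] with s hs
    exact ciSup_le fun x => bs_pointwise_bound s hs x
end
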